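/- Parallel composition distributes over probabilistic choice up to simulation equivalence: for probabilistic automata P, Q, R with pairwise disjoint state spaces, every p ∈ [0,1] and any frame A ⊆ E, P ∥_A Q ⊕_p P ∥_A R ≡ P ∥_A (Q ⊕_p R) (where on the left the two occurrences of P are taken as disjoint copies). -/

import Mathlib

open scoped ENNReal

namespace PCKA

/-- A probabilistic automaton over the (non-silent) action alphabet `α`, with state
space `σ`.  Transition labels are `Option α`, where `none` plays the role of the
silent action `τ`; `trans x a μ` means `x —a→ μ` where `μ` is a (countably
supported) probability distribution over states, `init` is the initial
distribution and `final` the set of final states. -/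
structure PAut (α : Type) (σ : Type) where
  trans : σ → Option α → PMF σ → Prop
  init : PMF σ
  final : Set σ

/-- The lifting `S̄ ⊆ D(X) × D(Y)` of a relation `S ⊆ X × D(Y)`: `μ S̄ ν` iff there
are weights `p n` summing to `1`, states `x n` and distributions `νs n` with
`μ = Σ_n p n · δ_{x n}`, `x n S νs n` for each `n`, and `ν = Σ_n p n · νs n`. -/
def Lift {X Y : Type} (S : X → PMF Y → Prop) (μ : PMF X) (ν : PMF Y) : Prop :=
  ∃ (p : ℕ → ℝ≥0∞) (x : ℕ → X) (νs : ℕ → PMF Y),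
    (∑' n, p n) = 1 ∧
    (∀ s, μ s = ∑' n, p n * (PMF.pure (x n)) s) ∧
    (∀ n, S (x n) (νs n)) ∧
    (∀ t, ν t = ∑' n, p n * (νs n) t)

/-- The double lifting `T̿ ⊆ D(X) × D(Z)` of a relation `T ⊆ X × Z`, via a weight
function `w`. -/
def DLift {X Z : Type} (T : X → Z → Prop) (μ : PMF X) (ψ : PMF Z) : Prop :=
  ∃ w : X → Z → ℝ≥0∞,
    (∀ x z, 0 < w x z → T x z) ∧
    (∀ x, (∑' z, w x z) = μ x) ∧
    (∀ z, (∑' x, w x z) = ψ z)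

/-- Flattening `π : D(D(Y)) → D(Y)`, `π(ψ) = Σ_{ν} ψ(ν)·ν`. -/
noncomputable def flat {Y : Type} (ψ : PMF (PMF Y)) : PMF Y := ψ.bind id

/-- Single transition step, with the τ-transitions extended by reflexivity
(`x —τ→ δ_x` is always allowed). -/
def step {α σ : Type} (P : PAut α σ) (a : Option α) (x : σ) (μ : PMF σ) : Prop :=
  P.trans x a μ ∨ (a = none ∧ μ = PMF.pure x)

/-- Weak internal moves `⇒`: the reflexive-transitive closure of the lifted
(extended) τ-transition relation on distributions. -/
def WeakTau {α σ : Type} (P : PAut α σ) : PMF σ → PMF σ → Prop :=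
  Relation.ReflTransGen (Lift (step P none))

/-- Weak `a`-transition `μ ⇒^a μ'`: `μ ⇒ μ₁ —ā→ μ₂ ⇒ μ'`. -/
def WeakStep {α σ : Type} (P : PAut α σ) (a : Option α) (μ μ' : PMF σ) : Prop :=
  ∃ μ₁ μ₂, WeakTau P μ μ₁ ∧ Lift (step P a) μ₁ μ₂ ∧ WeakTau P μ₂ μ'

/-- A probabilistic simulation from `P` to `Q` (Deng et al. style). -/
structure IsSimulation {α σ τ' : Type} (P : PAut α σ) (Q : PAut α τ')
    (S : σ → PMF τ' → Prop) : Prop where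
  init : ∃ ν₀', WeakTau Q Q.init ν₀' ∧ Lift S P.init ν₀'
  step : ∀ x a μ', P.trans x a μ' → ∀ ν, S x ν →
    ∃ ν', WeakStep Q a ν ν' ∧ Lift S μ' ν'
  final : ∀ x ν, x ∈ P.final → S x ν →
    ∃ ν', WeakTau Q ν ν' ∧ ∀ y ∈ ν'.support, y ∈ Q.final

/-- A probabilistic weak forward simulation from `P` to `Q` (Segala style). -/
structure IsWFSimulation {α σ τ' : Type} (P : PAut α σ) (Q : PAut α τ')
    (S : σ → PMF τ' → Prop) : Prop where
  init : ∃ ψ₀ : PMF (PMF τ'), DLift S P.init ψ₀ ∧ WeakTau Q Q.init (flat ψ₀)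
  step : ∀ x a μ', P.trans x a μ' → ∀ ν, S x ν →
    ∃ ψ : PMF (PMF τ'), WeakStep Q a ν (flat ψ) ∧ DLift S μ' ψ
  final : ∀ x ν, x ∈ P.final → S x ν →
    ∃ ψ : PMF (PMF τ'), (∀ ρ ∈ ψ.support, ∀ y ∈ ρ.support, y ∈ Q.final) ∧
      WeakTau Q ν (flat ψ)

/-- `P ≤ Q`: there exists a probabilistic simulation from `P` to `Q`. -/
def Sim {α σ τ' : Type} (P : PAut α σ) (Q : PAut α τ') : Prop :=
  ∃ S, IsSimulation P Q S

/-- Simulation equivalence `P ≡ Q`. -/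
def SimEquiv {α σ τ' : Type} (P : PAut α σ) (Q : PAut α τ') : Prop :=
  Sim P Q ∧ Sim Q P

/-- Convex combination `p·μ + (1−p)·ν` of two distributions. -/
noncomputable def mix {X : Type} (p : ℝ≥0∞) (hp : p ≤ 1) (μ ν : PMF X) : PMF X :=
  ⟨fun x => p * μ x + (1 - p) * ν x, by
    refine ENNReal.summable.hasSum_iff.mpr ?_
    rw [ENNReal.tsum_add, ENNReal.tsum_mul_left, ENNReal.tsum_mul_left,
      μ.tsum_coe, ν.tsum_coe, mul_one, mul_one, add_tsub_cancel_of_le hp]⟩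

/-- Product distribution `μ × ν`, with `(μ × ν)(x,y) = μ(x)·ν(y)`. -/
noncomputable def pprod {X Y : Type} (μ : PMF X) (ν : PMF Y) : PMF (X × Y) :=
  μ.bind fun x => ν.map fun y => (x, y)

/-- The skip automaton `1`: one state, no transitions, that state is final. -/
noncomputable def skip (α : Type) : PAut α Unit :=
  ⟨fun _ _ _ => False, PMF.pure (), Set.univ⟩

/-- The deadlock automaton `0`: one state, no transitions, no final state. -/
noncomputable def deadlock (α : Type) : PAut α Unit :=
  ⟨fun _ _ _ => False, PMF.pure (), ∅⟩

/-- Nondeterministic choice `P + Q`: disjoint union of the two automata (realised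
by the sum type) plus a fresh initial state `z = none` with `z —τ→ μ₀` and
`z —τ→ ν₀`. -/
noncomputable def nchoice {α σ τ' : Type} (P : PAut α σ) (Q : PAut α τ') :
    PAut α (Option (σ ⊕ τ')) where
  trans := fun s a μ =>
    match s with
    | none => a = none ∧
        (μ = P.init.map (fun x => some (Sum.inl x)) ∨
         μ = Q.init.map (fun y => some (Sum.inr y)))
    | some (Sum.inl x) => ∃ μ', P.trans x a μ' ∧ μ = μ'.map (fun x => some (Sum.inl x))
    | some (Sum.inr y) => ∃ ν', Q.trans y a ν' ∧ μ = ν'.map (fun y => some (Sum.inr y))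
  init := PMF.pure none
  final := {s | (∃ x ∈ P.final, s = some (Sum.inl x)) ∨ (∃ y ∈ Q.final, s = some (Sum.inr y))}

/-- Sequential composition `P · Q`: disjoint union (realised by the sum type),
with a τ-transition from each final state of `P` to the initial distribution of
`Q`; initial distribution that of `P`, final states those of `Q`. -/
noncomputable def pseq {α σ τ' : Type} (P : PAut α σ) (Q : PAut α τ') :
    PAut α (σ ⊕ τ') where
  trans := fun s a μ =>
    match s with
    | Sum.inl x =>
        (∃ μ', P.trans x a μ' ∧ μ = μ'.map Sum.inl) ∨
        (a = none ∧ x ∈ P.final ∧ μ = Q.init.map Sum.inr)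
    | Sum.inr y => ∃ ν', Q.trans y a ν' ∧ μ = ν'.map Sum.inr
  init := P.init.map Sum.inl
  final := {s | ∃ y ∈ Q.final, s = Sum.inr y}

/-- Kleene star `P*`: a fresh state `z = none` which is initial and the only
final state, with `z —τ→ μ₀` and `x —τ→ δ_z` for each final state `x` of `P`. -/
noncomputable def pstar {α σ : Type} (P : PAut α σ) : PAut α (Option σ) where
  trans := fun s a μ =>
    match s with
    | none => a = none ∧ μ = P.init.map some
    | some x =>
        (∃ μ', P.trans x a μ' ∧ μ = μ'.map some) ∨
        (a = none ∧ x ∈ P.final ∧ μ = PMF.pure none)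
  init := PMF.pure none
  final := {none}

/-- Probabilistic choice `P ⊕_p Q`: disjoint union with initial distribution
`p·μ₀ + (1−p)·ν₀`. -/
noncomputable def pchoice {α σ τ' : Type} (p : ℝ≥0∞) (hp : p ≤ 1)
    (P : PAut α σ) (Q : PAut α τ') : PAut α (σ ⊕ τ') where
  trans := fun s a μ =>
    match s with
    | Sum.inl x => ∃ μ', P.trans x a μ' ∧ μ = μ'.map Sum.inl
    | Sum.inr y => ∃ ν', Q.trans y a ν' ∧ μ = ν'.map Sum.inr
  init := mix p hp (P.init.map Sum.inl) (Q.init.map Sum.inr)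
  final := {s | (∃ x ∈ P.final, s = Sum.inl x) ∨ (∃ y ∈ Q.final, s = Sum.inr y)}

/-- CSP-style parallel composition `P ∥_A Q` synchronising on the frame `A`:
actions in `A` must be performed jointly, all other actions (including τ) are
interleaved. -/
noncomputable def par {α σ τ' : Type} (A : Set α) (P : PAut α σ) (Q : PAut α τ') :
    PAut α (σ × τ') where
  trans := fun s a μπ => ∃ μ ν, μπ = pprod μ ν ∧
    ((∃ b ∈ A, a = some b ∧ P.trans s.1 a μ ∧ Q.trans s.2 a ν) ∨
     ((∀ b ∈ A, a ≠ some b) ∧ P.trans s.1 a μ ∧ ν = PMF.pure s.2) ∨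
     ((∀ b ∈ A, a ≠ some b) ∧ Q.trans s.2 a ν ∧ μ = PMF.pure s.1))
  init := pprod P.init Q.init
  final := {s | s.1 ∈ P.final ∧ s.2 ∈ Q.final}

theorem exists_enum {X : Type} (μ : PMF X) : ∃ (p : ℕ → ℝ≥0∞) (x : ℕ → X),
    ∀ g : X → ℝ≥0∞, ∑' n, p n * g (x n) = ∑' s, μ s * g s := by
  classical
  obtain ⟨x0, -⟩ := μ.support_nonempty
  have hc := μ.support_countable
  obtain ⟨e, he⟩ := hc.exists_injective_nat
  refine ⟨Function.extend e (fun s => μ s) 0, Function.extend e (fun s => (s : X)) (fun _ => x0),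
    fun g => ?_⟩
  rw [← he.tsum_eq, ← (Subtype.val_injective (p := (· ∈ μ.support))).tsum_eq]
  · refine tsum_congr fun s => ?_
    rw [he.extend_apply, he.extend_apply]
  · intro s hs
    rw [Function.mem_support] at hs
    exact ⟨⟨s, (μ.mem_support_iff s).2 (left_ne_zero_of_mul hs)⟩, rfl⟩
  · intro n hn
    rw [Function.mem_support] at hn
    by_contra h
    apply left_ne_zero_of_mul hn
    rw [Function.extend_apply']
    · rfl
    · exact h

theorem lift_map {X Y : Type} (f : X → Y) (μ : PMF X) :
    Lift (fun x ν => ν = PMF.pure (f x)) μ (μ.map f) := by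
  obtain ⟨p, x, h⟩ := exists_enum μ
  refine ⟨p, x, fun n => PMF.pure (f (x n)), ?_, ?_, fun _ => rfl, ?_⟩
  · simpa using h (fun _ => 1)
  · intro s
    rw [h (fun t => PMF.pure t s), ← PMF.bind_apply, PMF.bind_pure]
  · intro t
    rw [h (fun s => PMF.pure (f s) t), ← PMF.bind_apply]
    rfl

theorem lift_pure {X Y : Type} (S : X → PMF Y → Prop) (x : X) (ν : PMF Y) (h : S x ν) :
    Lift S (PMF.pure x) ν := by
  have h1 : ∑' n, (Pi.single 0 1 : ℕ → ℝ≥0∞) n = 1 := tsum_pi_single 0 1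
  refine ⟨Pi.single 0 1, fun _ => x, fun _ => ν, h1, fun s => ?_, fun _ => h, fun t => ?_⟩ <;>
    rw [ENNReal.tsum_mul_right, h1, one_mul]

theorem sim_of_map {α σ τ' : Type} (P : PAut α σ) (Q : PAut α τ') (f : σ → τ')
    (hi : P.init.map f = Q.init)
    (ht : ∀ x a μ, P.trans x a μ → Q.trans (f x) a (μ.map f))
    (hf : ∀ x ∈ P.final, f x ∈ Q.final) : Sim P Q := by
  refine ⟨fun x ν => ν = PMF.pure (f x), ⟨Q.init, .refl, ?_⟩, ?_, ?_⟩
  · rw [← hi]; exact lift_map f _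
  · rintro x a μ h ν rfl
    exact ⟨μ.map f, ⟨_, _, .refl, lift_pure _ _ _ (Or.inl (ht x a μ h)), .refl⟩, lift_map f _⟩
  · rintro x ν hx rfl
    refine ⟨_, .refl, fun y hy => ?_⟩
    rw [PMF.support_pure, Set.mem_singleton_iff] at hy
    exact hy ▸ hf x hx

theorem mix_map {X Y : Type} (p : ℝ≥0∞) (hp : p ≤ 1) (μ ν : PMF X) (k : X → PMF Y) :
    (mix p hp μ ν).bind k = mix p hp (μ.bind k) (ν.bind k) := by
  ext y
  have h : ∀ (μ ν : PMF Y), mix p hp μ ν y = p * μ y + (1 - p) * ν y := fun _ _ => rfl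
  have h' : ∀ x, mix p hp μ ν x = p * μ x + (1 - p) * ν x := fun _ => rfl
  rw [h, PMF.bind_apply, PMF.bind_apply, PMF.bind_apply, ← ENNReal.tsum_mul_left,
    ← ENNReal.tsum_mul_left, ← ENNReal.tsum_add]
  refine tsum_congr fun x => ?_
  rw [h']; ring

theorem pprod_swap {X Y : Type} (μ : PMF X) (ν : PMF Y) :
    pprod μ ν = ν.bind fun y => μ.map fun x => (x, y) := by
  unfold pprod PMF.map
  rw [PMF.bind_comm]
  rfl

theorem pprod_mix {X Y : Type} (p : ℝ≥0∞) (hp : p ≤ 1) (μ : PMF X) (ν κ : PMF Y) :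
    pprod μ (mix p hp ν κ) = mix p hp (pprod μ ν) (pprod μ κ) := by
  simp only [pprod_swap, mix_map]

theorem pprod_map {X Y Z : Type} (μ : PMF X) (ν : PMF Y) (g : Y → Z) :
    pprod μ (ν.map g) = (pprod μ ν).map (Prod.map id g) := by
  unfold pprod
  rw [PMF.map_bind]
  simp only [PMF.map_comp]
  rfl

def fwd {X Y Z : Type} : (X × Y) ⊕ (X × Z) → X × (Y ⊕ Z) :=
  Sum.elim (Prod.map id Sum.inl) (Prod.map id Sum.inr)

def bwd {X Y Z : Type} : X × (Y ⊕ Z) → (X × Y) ⊕ (X × Z)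
  | (x, Sum.inl y) => Sum.inl (x, y)
  | (x, Sum.inr y) => Sum.inr (x, y)

theorem init_fwd {α σ₁ σ₂ σ₃ : Type}
    (P : PAut α σ₁) (Q : PAut α σ₂) (R : PAut α σ₃)
    (p : ℝ≥0∞) (hp : p ≤ 1) (A : Set α) :
    (pchoice p hp (par A P Q) (par A P R)).init.map fwd
      = (par A P (pchoice p hp Q R)).init := by
  change (mix p hp ((pprod P.init Q.init).map Sum.inl) ((pprod P.init R.init).map Sum.inr)).map fwd
    = pprod P.init (mix p hp (Q.init.map Sum.inl) (R.init.map Sum.inr))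
  rw [pprod_mix, pprod_map, pprod_map]
  have := mix_map p hp ((pprod P.init Q.init).map Sum.inl) ((pprod P.init R.init).map Sum.inr)
    (fun x => PMF.pure (fwd x))
  refine this.trans ?_
  congr 1
  · exact PMF.map_comp _ _ _
  · exact PMF.map_comp _ _ _

/-- parallel composition distributes over probabilistic choice up
to simulation equivalence: `P ∥_A Q ⊕_p P ∥_A R ≡ P ∥_A (Q ⊕_p R)` (the two
occurrences of `P` on the left are disjoint copies). -/
theorem par_distrib_pchoice {α σ₁ σ₂ σ₃ : Type}
    (P : PAut α σ₁) (Q : PAut α σ₂) (R : PAut α σ₃)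
    (p : ℝ≥0∞) (hp : p ≤ 1) (E A : Set α) (hA : A ⊆ E) :
    SimEquiv (pchoice p hp (par A P Q) (par A P R))
      (par A P (pchoice p hp Q R)) := by
  refine ⟨sim_of_map _ _ fwd (init_fwd P Q R p hp A) ?_ ?_,
    sim_of_map _ _ bwd ?_ ?_ ?_⟩
  · rintro (⟨x, y⟩ | ⟨x, y⟩) a μ ⟨_, ⟨μ, ν, rfl, h⟩, rfl⟩
    · refine ⟨μ, ν.map Sum.inl, ?_, ?_⟩
      · rw [PMF.map_comp, pprod_map]; rfl
      · rcases h with ⟨b, hb, rfl, h1, h2⟩ | ⟨hb, h1, rfl⟩ | ⟨hb, h1, rfl⟩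
        · exact Or.inl ⟨b, hb, rfl, h1, ν, h2, rfl⟩
        · exact Or.inr (Or.inl ⟨hb, h1, PMF.pure_map _ _⟩)
        · exact Or.inr (Or.inr ⟨hb, ⟨ν, h1, rfl⟩, rfl⟩)
    · refine ⟨μ, ν.map Sum.inr, ?_, ?_⟩
      · rw [PMF.map_comp, pprod_map]; rfl
      · rcases h with ⟨b, hb, rfl, h1, h2⟩ | ⟨hb, h1, rfl⟩ | ⟨hb, h1, rfl⟩
        · exact Or.inl ⟨b, hb, rfl, h1, ν, h2, rfl⟩
        · exact Or.inr (Or.inl ⟨hb, h1, PMF.pure_map _ _⟩)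
        · exact Or.inr (Or.inr ⟨hb, ⟨ν, h1, rfl⟩, rfl⟩)
  · rintro s (⟨⟨x, y⟩, ⟨h1, h2⟩, rfl⟩ | ⟨⟨x, y⟩, ⟨h1, h2⟩, rfl⟩)
    · exact ⟨h1, Or.inl ⟨y, h2, rfl⟩⟩
    · exact ⟨h1, Or.inr ⟨y, h2, rfl⟩⟩
  · rw [← init_fwd, PMF.map_comp]
    convert PMF.map_id _
    ext1 s
    rcases s with ⟨x, y⟩ | ⟨x, y⟩ <;> rfl
  · have key1 : ∀ (μ : PMF σ₁) (ν : PMF σ₂), (pprod μ (ν.map Sum.inl)).map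
        (bwd : σ₁ × (σ₂ ⊕ σ₃) → _) = (pprod μ ν).map Sum.inl := fun μ ν => by
      rw [pprod_map, PMF.map_comp]; rfl
    have key2 : ∀ (μ : PMF σ₁) (ν : PMF σ₃), (pprod μ (ν.map Sum.inr)).map
        (bwd : σ₁ × (σ₂ ⊕ σ₃) → _) = (pprod μ ν).map Sum.inr := fun μ ν => by
      rw [pprod_map, PMF.map_comp]; rfl
    rintro ⟨x, y | y⟩ a μ ⟨μ, ν, rfl, h⟩
    · rcases h with ⟨b, hb, rfl, h1, ν, h2, rfl⟩ | ⟨hb, h1, rfl⟩ | ⟨hb, ⟨ν, h1, rfl⟩, rfl⟩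
      · exact ⟨_, ⟨μ, ν, rfl, Or.inl ⟨b, hb, rfl, h1, h2⟩⟩, key1 _ _⟩
      · refine ⟨_, ⟨μ, PMF.pure y, rfl, Or.inr (Or.inl ⟨hb, h1, rfl⟩)⟩, ?_⟩
        rw [← key1, PMF.pure_map]
      · exact ⟨_, ⟨PMF.pure x, ν, rfl, Or.inr (Or.inr ⟨hb, h1, rfl⟩)⟩, key1 _ _⟩
    · rcases h with ⟨b, hb, rfl, h1, ν, h2, rfl⟩ | ⟨hb, h1, rfl⟩ | ⟨hb, ⟨ν, h1, rfl⟩, rfl⟩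
      · exact ⟨_, ⟨μ, ν, rfl, Or.inl ⟨b, hb, rfl, h1, h2⟩⟩, key2 _ _⟩
      · refine ⟨_, ⟨μ, PMF.pure y, rfl, Or.inr (Or.inl ⟨hb, h1, rfl⟩)⟩, ?_⟩
        rw [← key2, PMF.pure_map]
      · exact ⟨_, ⟨PMF.pure x, ν, rfl, Or.inr (Or.inr ⟨hb, h1, rfl⟩)⟩, key2 _ _⟩
  · rintro ⟨x, y⟩ ⟨h1, ⟨y, h2, h⟩ | ⟨y, h2, h⟩⟩
    · obtain rfl : _ = _ := h
      exact Or.inl ⟨(x, y), ⟨h1, h2⟩, rfl⟩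
    · obtain rfl : _ = _ := h
      exact Or.inr ⟨(x, y), ⟨h1, h2⟩, rfl⟩

end PCKA
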